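/- arXiv:1812.09753 — 2 statements merged into one kernel-verified Lean document; each statement's English description precedes it below -/
import Mathlib

section
/- Let n ≥ 2, let u ∈ ℝ^{n+1} be a unit vector, and let X ⊆ S^n be a nonempty compact set with geodesic diameter diam X < π. Then the two-point symmetrization τ_H(X) is compact, σ(τ_H(X)) = σ(X), and diam τ_H(X) ≤ diam X. -/
/-!
For an involution `s` and a half-space `P`, symmetrization replaces each point of `X` outside `P`
whose mirror image is missing from `X` by that mirror image, and leaves the other points of `X`
in place. Since `s` preserves the measure, so does this exchange. Up to applying `s` to both of two
points of the symmetrization, either both already lie in `X`, or they lie in `P` and `X` contains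
one of them and the mirror image of the other. In the latter case passing to the mirror image does
not decrease the distance, since
`⟪x, s y⟫ = ⟪x, y⟫ - 2 * ⟪x, u⟫ * ⟪y, u⟫ ≤ ⟪x, y⟫` on the hemisphere `⟪·, u⟫ ≥ 0`.
-/

open MeasureTheory

noncomputable section

/-- Euclidean space `ℝ^{n+1}`. -/
abbrev Esp (n : ℕ) : Type := EuclideanSpace ℝ (Fin (n + 1))

/-- The unit sphere `S^n ⊆ ℝ^{n+1}`, as a subtype. -/
abbrev Sph (n : ℕ) : Type := Metric.sphere (0 : Esp n) 1

/-- Geodesic distance `d(x,y) = arccos ⟨x,y⟩` on the sphere. -/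
def gd {n : ℕ} (x y : Sph n) : ℝ :=
  Real.arccos (inner (𝕜 := ℝ) (x : Esp n) (y : Esp n))

/-- Closed geodesic ball `B(z,r) = {x ∈ Sⁿ : d(x,z) ≤ r}`. -/
def sphBall {n : ℕ} (z : Sph n) (r : ℝ) : Set (Sph n) := {x | gd x z ≤ r}

/-- Geodesic diameter `diam X = sup {d(x,y) : x, y ∈ X}`. -/
def sphDiam {n : ℕ} (X : Set (Sph n)) : ℝ :=
  sSup {r | ∃ x ∈ X, ∃ y ∈ X, r = gd x y}

/-- Spherical volume: the `n`-dimensional (Hausdorff) surface measure on `S^n`. -/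
def sphVol (n : ℕ) : Measure (Sph n) := μH[(n : ℝ)]

/-- Reflection of `ℝ^{n+1}` through the hyperplane orthogonal to `u`. -/
def reflMap {n : ℕ} (u : Esp n) (p : Esp n) : Esp n :=
  p - (2 * inner (𝕜 := ℝ) p u) • u

/-- Two-point symmetrization of `X ⊆ S^n` with respect to the unit vector `u`:
`τ_H(X) = ((X ∪ σ_H(X)) ∩ H⁺) ∪ ((X ∩ σ_H(X)) ∩ H⁻)` where
`H⁺ = {⟨x,u⟩ ≥ 0}`, `H⁻ = {⟨x,u⟩ ≤ 0}` and `σ_H` is the reflection through `u^⊥`. -/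
def twoPointSym {n : ℕ} (u : Esp n) (X : Set (Sph n)) : Set (Sph n) :=
  {x | (0 ≤ inner (𝕜 := ℝ) (x : Esp n) u ∧
          (x ∈ X ∨ reflMap u (x : Esp n) ∈ (((↑) '' X : Set (Esp n))))) ∨
       (inner (𝕜 := ℝ) (x : Esp n) u ≤ 0 ∧
          (x ∈ X ∧ reflMap u (x : Esp n) ∈ (((↑) '' X : Set (Esp n)))))}

section Polarization

variable {α : Type*} {s : α → α} {P X : Set α}

/-- Two-point symmetrization of `X` with respect to an abstract reflection `s` and half-space `P`.
Points of `X ∩ s ⁻¹' X` are kept on both sides of the mirror, so the opposite half-space need not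
be mentioned. -/
def polarization (s : α → α) (P X : Set α) : Set α :=
  (X ∩ s ⁻¹' X) ∪ ((X ∪ s ⁻¹' X) ∩ P)

/-- The points of `X` outside `P` whose mirror images are missing from `X`: those that
`polarization s P X` exchanges for their mirror images. -/
def unpairedPart (s : α → α) (P X : Set α) : Set α :=
  X \ (s ⁻¹' X ∪ P)

lemma polarization_eq_sdiff_union_preimage (hs : s.Involutive)
    (hP : ∀ x, s x ≠ x → (s x ∈ P ↔ x ∉ P)) :
    polarization s P X = X \ unpairedPart s P X ∪ s ⁻¹' unpairedPart s P X := by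
  ext x
  have hx : x ∉ X → s x ∈ X → (s x ∈ P ↔ x ∉ P) := fun hxX hsX =>
    hP x fun hfix => hxX (hfix ▸ hsX)
  simp only [polarization, unpairedPart, Set.mem_union, Set.mem_inter_iff, Set.mem_sdiff,
    Set.mem_preimage, hs x]
  tauto

lemma disjoint_preimage_unpairedPart (hs : s.Involutive) :
    Disjoint X (s ⁻¹' unpairedPart s P X) := by
  refine Set.disjoint_left.mpr fun x hx hsx => hsx.2 (Or.inl ?_)
  rwa [Set.mem_preimage, hs x]

theorem measure_polarization [MeasurableSpace α] {μ : Measure α} (hs : s.Involutive)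
    (hP : ∀ x, s x ≠ x → (s x ∈ P ↔ x ∉ P)) (hμ : MeasurePreserving s μ μ)
    (hPm : MeasurableSet P) (hX : MeasurableSet X) :
    μ (polarization s P X) = μ X := by
  have hA : MeasurableSet (unpairedPart s P X) := hX.diff ((hμ.measurable hX).union hPm)
  have hAX : unpairedPart s P X ⊆ X := Set.sdiff_subset
  calc
    μ (polarization s P X) = μ (X \ unpairedPart s P X) + μ (s ⁻¹' unpairedPart s P X) := by
      rw [polarization_eq_sdiff_union_preimage hs hP,
        measure_union ((disjoint_preimage_unpairedPart hs).mono_left Set.sdiff_subset)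
          (hμ.measurable hA)]
    _ = μ (X \ unpairedPart s P X) + μ (X ∩ unpairedPart s P X) := by
      rw [hμ.measure_preimage hA.nullMeasurableSet,
        Set.inter_eq_self_of_subset_right hAX]
    _ = μ X := measure_sdiff_add_inter X hA

lemma isClosed_polarization [TopologicalSpace α] (hs : Continuous s) (hP : IsClosed P)
    (hX : IsClosed X) : IsClosed (polarization s P X) :=
  (hX.inter (hX.preimage hs)).union ((hX.union (hX.preimage hs)).inter hP)

lemma exists_le_of_mem_polarization {β : Type*} [Preorder β] {d : α → α → β}
    (hs : s.Involutive) (hd : ∀ x y, d (s x) (s y) = d x y)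
    (hP : ∀ x ∈ P, ∀ y ∈ P, d x y ≤ d x (s y)) {x y : α}
    (hx : x ∈ polarization s P X) (hy : y ∈ polarization s P X) :
    ∃ a ∈ X, ∃ b ∈ X, d x y ≤ d a b := by
  have of_mem (hx : x ∈ X) (hy : y ∈ X) : ∃ a ∈ X, ∃ b ∈ X, d x y ≤ d a b :=
    ⟨x, hx, y, hy, le_rfl⟩
  have of_mirror (hx : s x ∈ X) (hy : s y ∈ X) : ∃ a ∈ X, ∃ b ∈ X, d x y ≤ d a b :=
    ⟨s x, hx, s y, hy, (hd x y).ge⟩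
  rcases hx with ⟨hx, hsx⟩ | ⟨hx | hsx, hxP⟩
  · rcases hy with ⟨hy, -⟩ | ⟨hy | hsy, -⟩
    · exact of_mem hx hy
    · exact of_mem hx hy
    · exact of_mirror hsx hsy
  · rcases hy with ⟨hy, -⟩ | ⟨hy | hsy, hyP⟩
    · exact of_mem hx hy
    · exact of_mem hx hy
    · exact ⟨x, hx, s y, hsy, hP x hxP y hyP⟩
  · rcases hy with ⟨-, hsy⟩ | ⟨hy | hsy, hyP⟩
    · exact of_mirror hsx hsy
    · refine ⟨s x, hsx, y, hy, (hP x hxP y hyP).trans_eq ?_⟩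
      rw [← hd x (s y), hs y]
    · exact of_mirror hsx hsy

end Polarization

section Reflection

variable {E : Type*} [NormedAddCommGroup E] [InnerProductSpace ℝ E] {r : ℝ}

lemma inner_reflection_orthogonal_singleton_self (u x : E) :
    inner ℝ ((ℝ ∙ u)ᗮ.reflection x) u = -inner ℝ x u := by
  rw [← (ℝ ∙ u)ᗮ.reflection.inner_map_map x u,
    Submodule.reflection_orthogonalComplement_singleton_eq_neg, inner_neg_right, neg_neg]

lemma inner_reflection_orthogonal_singleton (u x y : E) :
    inner ℝ x ((ℝ ∙ u)ᗮ.reflection y) =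
      inner ℝ x y - 2 * (inner ℝ x u * inner ℝ y u / ‖u‖ ^ 2) := by
  rw [Submodule.reflection_orthogonal_apply, Submodule.reflection_singleton_apply, neg_sub,
    inner_sub_right, ← Nat.cast_smul_eq_nsmul ℝ, inner_smul_right, inner_smul_right,
    real_inner_comm y u, RCLike.ofReal_real_eq_id, id]
  push_cast
  ring

lemma inner_reflection_le_inner {u x y : E} (hx : 0 ≤ inner ℝ x u) (hy : 0 ≤ inner ℝ y u) :
    inner ℝ x ((ℝ ∙ u)ᗮ.reflection y) ≤ inner ℝ x y := by
  rw [inner_reflection_orthogonal_singleton]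
  exact sub_le_self _ (by positivity)

/-- The reflection in a subspace `K`, restricted to the sphere of radius `r` about the origin. -/
def sphereReflection (K : Submodule ℝ E) [K.HasOrthogonalProjection] (r : ℝ) :
    Metric.sphere (0 : E) r ≃ᵢ Metric.sphere (0 : E) r where
  toEquiv := K.reflection.toEquiv.subtypeEquiv fun x => by simp
  isometry_toFun x y := K.reflection.isometry x y

lemma coe_sphereReflection (K : Submodule ℝ E) [K.HasOrthogonalProjection]
    (x : Metric.sphere (0 : E) r) : (sphereReflection K r x : E) = K.reflection x := rfl

lemma sphereReflection_involutive (K : Submodule ℝ E) [K.HasOrthogonalProjection] :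
    Function.Involutive (sphereReflection K r) := fun x =>
  Subtype.ext (K.reflection_reflection x)

/-- The closed hemisphere with pole in direction `u`, on the sphere of radius `r`: the set `H⁺` of
the two-point symmetrization. -/
def hemisphere (u : E) (r : ℝ) : Set (Metric.sphere (0 : E) r) :=
  {x | 0 ≤ inner ℝ (x : E) u}

lemma isClosed_hemisphere (u : E) : IsClosed (hemisphere u r) :=
  isClosed_le continuous_const (by fun_prop)

lemma sphereReflection_mem_hemisphere_iff {u : E} {x : Metric.sphere (0 : E) r}
    (hx : sphereReflection (ℝ ∙ u)ᗮ r x ≠ x) :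
    sphereReflection (ℝ ∙ u)ᗮ r x ∈ hemisphere u r ↔ x ∉ hemisphere u r := by
  have hxu : inner ℝ (x : E) u ≠ 0 := fun h =>
    hx <| Subtype.ext <| Submodule.reflection_mem_subspace_eq_self <|
      Submodule.mem_orthogonal_singleton_iff_inner_left.mpr h
  simp only [hemisphere, Set.mem_ofPred_eq, coe_sphereReflection,
    inner_reflection_orthogonal_singleton_self, Left.nonneg_neg_iff, not_le]
  exact hxu.le_iff_lt

end Reflection

section Sphere

variable {n : ℕ}

lemma reflMap_eq_reflection {u : Esp n} (hu : ‖u‖ = 1) (x : Esp n) :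
    reflMap u x = (ℝ ∙ u)ᗮ.reflection x := by
  rw [reflMap, Submodule.reflection_orthogonal_apply, Submodule.reflection_singleton_apply, hu,
    real_inner_comm]
  simp [mul_smul, two_smul]

lemma twoPointSym_eq_polarization {u : Esp n} (hu : ‖u‖ = 1) (X : Set (Sph n)) :
    twoPointSym u X = polarization (sphereReflection (ℝ ∙ u)ᗮ 1) (hemisphere u 1) X := by
  ext x
  have hmirror : reflMap u (x : Esp n) ∈ ((↑) '' X : Set (Esp n)) ↔
      sphereReflection (ℝ ∙ u)ᗮ 1 x ∈ X := by
    rw [reflMap_eq_reflection hu, ← coe_sphereReflection, Subtype.val_injective.mem_set_image]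
  have htotal := le_total 0 (inner ℝ (x : Esp n) u)
  simp only [twoPointSym, polarization, hemisphere, Set.mem_ofPred_eq, hmirror, Set.mem_union,
    Set.mem_inter_iff, Set.mem_preimage]
  tauto

lemma measurePreserving_sphereReflection (K : Submodule ℝ (Esp n)) :
    MeasurePreserving (sphereReflection K 1) (sphVol n) (sphVol n) :=
  (sphereReflection K 1).measurePreserving_hausdorffMeasure n

lemma gd_sphereReflection (K : Submodule ℝ (Esp n)) (x y : Sph n) :
    gd (sphereReflection K 1 x) (sphereReflection K 1 y) = gd x y := by
  simp only [gd, coe_sphereReflection, LinearIsometryEquiv.inner_map_map]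

lemma gd_le_gd_sphereReflection {u : Esp n} {x y : Sph n} (hx : x ∈ hemisphere u 1)
    (hy : y ∈ hemisphere u 1) : gd x y ≤ gd x (sphereReflection (ℝ ∙ u)ᗮ 1 y) :=
  Real.arccos_le_arccos (inner_reflection_le_inner hx hy)

lemma gd_le_sphDiam {X : Set (Sph n)} {x y : Sph n} (hx : x ∈ X) (hy : y ∈ X) :
    gd x y ≤ sphDiam X := by
  refine le_csSup ⟨Real.pi, ?_⟩ ⟨x, hx, y, hy, rfl⟩
  rintro _ ⟨a, -, b, -, rfl⟩
  exact Real.arccos_le_pi _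

lemma sphDiam_nonneg (X : Set (Sph n)) : 0 ≤ sphDiam X := by
  refine Real.sSup_nonneg ?_
  rintro _ ⟨x, -, y, -, rfl⟩
  exact Real.arccos_nonneg _

lemma sphDiam_le_sphDiam {X Y : Set (Sph n)}
    (h : ∀ x ∈ X, ∀ y ∈ X, ∃ a ∈ Y, ∃ b ∈ Y, gd x y ≤ gd a b) : sphDiam X ≤ sphDiam Y := by
  refine Real.sSup_le ?_ (sphDiam_nonneg Y)
  rintro _ ⟨x, hx, y, hy, rfl⟩
  obtain ⟨a, ha, b, hb, hab⟩ := h x hx y hy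
  exact hab.trans (gd_le_sphDiam ha hb)

end Sphere

theorem twoPointSym_properties_general (n : ℕ) (u : Esp n) (hu : ‖u‖ = 1) (X : Set (Sph n))
    (hcomp : IsCompact X) :
    IsCompact (twoPointSym u X) ∧
      sphVol n (twoPointSym u X) = sphVol n X ∧
      sphDiam (twoPointSym u X) ≤ sphDiam X := by
  have hs := sphereReflection_involutive (ℝ ∙ u)ᗮ (r := 1)
  rw [twoPointSym_eq_polarization hu]
  refine ⟨?compact, ?volume, ?diameter⟩
  case compact =>
    exact (isClosed_polarization (sphereReflection _ _).continuous (isClosed_hemisphere u)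
      hcomp.isClosed).isCompact
  case volume =>
    exact measure_polarization hs (fun _ => sphereReflection_mem_hemisphere_iff)
      (measurePreserving_sphereReflection _) (isClosed_hemisphere u).measurableSet
      hcomp.measurableSet
  case diameter =>
    exact sphDiam_le_sphDiam fun _ hx _ hy =>
      exists_le_of_mem_polarization hs (gd_sphereReflection _)
        (fun _ hx _ hy => gd_le_gd_sphereReflection hx hy) hx hy

/-- two-point symmetrization preserves compactness and volume, and
does not increase the geodesic diameter. -/
theorem twoPointSym_properties (n : ℕ) (hn : 2 ≤ n) (u : Esp n) (hu : ‖u‖ = 1)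
    (X : Set (Sph n)) (hne : X.Nonempty) (hcomp : IsCompact X)
    (hdiam : sphDiam X < Real.pi) :
    IsCompact (twoPointSym u X) ∧
      sphVol n (twoPointSym u X) = sphVol n X ∧
      sphDiam (twoPointSym u X) ≤ sphDiam X := by
  exact twoPointSym_properties_general n u hu X hcomp
end
end

section
/- Let n ≥ 2 and let K ⊆ H^n be a compact convex set whose interior in H^n is nonempty. Suppose that for every v ∈ ℝ^{n+1} with 𝓑(v,v) < 0 the two-point symmetrization τ_v(K) is convex. Then K is a closed hyperbolic ball: there exist z ∈ H^n and r > 0 with K = B(z,r). -/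
noncomputable section

/-- The ambient space `ℝ^{n+1} = ℝ × ℝ^n` of the hyperboloid model. -/
abbrev Amb (n : ℕ) : Type := ℝ × EuclideanSpace ℝ (Fin n)

/-- The Lorentzian bilinear form `𝓑((s,x),(t,y)) = s·t − ⟨x,y⟩`. -/
def Bform {n : ℕ} (p q : Amb n) : ℝ := p.1 * q.1 - inner (𝕜 := ℝ) p.2 q.2

/-- The hyperboloid model `H^n = {(t,x) : t ≥ 1, t² − ‖x‖² = 1}` as a subtype. -/
abbrev Hyp (n : ℕ) : Type := {p : Amb n // 1 ≤ p.1 ∧ p.1 ^ 2 - ‖p.2‖ ^ 2 = 1}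

/-- Closed hyperbolic ball `B(z,r) = {x ∈ H^n : 𝓑(x,z) ≤ cosh r}`. -/
def hBall {n : ℕ} (z : Hyp n) (r : ℝ) : Set (Hyp n) :=
  {x | Bform (x : Amb n) (z : Amb n) ≤ Real.cosh r}

/-- `K ⊆ H^n` is convex if the cone `{t • x : t ≥ 0, x ∈ K}` is convex in `ℝ^{n+1}`. -/
def HConvex {n : ℕ} (K : Set (Hyp n)) : Prop :=
  Convex ℝ {p : Amb n | ∃ t : ℝ, 0 ≤ t ∧ ∃ x ∈ K, p = t • (x : Amb n)}

/-- Reflection of `ℝ^{n+1}` through the Lorentz-orthogonal complement of `v`: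
`σ_v(p) = p − (2𝓑(p,v)/𝓑(v,v)) • v`. -/
def hRefl {n : ℕ} (v : Amb n) (p : Amb n) : Amb n :=
  p - (2 * Bform p v / Bform v v) • v

/-- Two-point symmetrization of `K ⊆ H^n` with respect to `v` (with `𝓑(v,v) < 0`):
`τ_v(K) = ((K ∪ σ_v(K)) ∩ H_v⁺) ∪ ((K ∩ σ_v(K)) ∩ H_v⁻)` where
`H_v⁺ = {𝓑(x,v) ≥ 0}` and `H_v⁻ = {𝓑(x,v) ≤ 0}`. -/
def hTwoPointSym {n : ℕ} (v : Amb n) (K : Set (Hyp n)) : Set (Hyp n) :=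
  {x | (0 ≤ Bform (x : Amb n) v ∧
          (x ∈ K ∨ hRefl v (x : Amb n) ∈ (((↑) '' K : Set (Amb n))))) ∨
       (Bform (x : Amb n) v ≤ 0 ∧
          (x ∈ K ∧ hRefl v (x : Amb n) ∈ (((↑) '' K : Set (Amb n)))))}

/-!
Let `a` and `b` be smooth boundary points of `K` with inward unit normals `N` and `M`. The
reflection in `v = b - a` exchanges `a` and `b`, and near `a` the symmetrization in `v` is the
union of `K` and its mirror image. Since the union of two distinct half-spaces is not convex, the
reflection maps `N` to `M`, so `M - N` is a multiple of `b - a`. No three points of the hyperboloid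
are collinear, so the factor is the same for all pairs and `N = c • a + w` with `c` and `w`
independent of `a`. As `N` is orthogonal to `a`, the vector `z = -c⁻¹ • w` satisfies `𝓑(a, z) = 1`
at every smooth boundary point. These are dense in the boundary of a convex body, so `𝓑(·, z) = 1`
on the whole boundary and `K = {x | 𝓑(x, z) ≤ 1}`. Compactness forces `z` to be timelike, and
normalizing it gives the center of the ball. Convexity of `K` comes from symmetrizing in a
hyperplane that misses `K`.
-/

open Filter Topology Metric

section TangentHalfSpace

variable {V W : Type*} [AddCommGroup V] [Module ℝ V] [AddCommGroup W] [Module ℝ W]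

/-- The half-space `{x | f a ≤ f x}` is the closure of the tangent cone of `C` at `a`: it
contains `C`, and every direction pointing strictly into it enters `C`. For convex `C` this says
that `a` is a smooth boundary point with inner conormal `f`. -/
structure HasTangentHalfSpace (C : Set V) (a : V) (f : V →ₗ[ℝ] ℝ) : Prop where
  ne_zero : f ≠ 0
  le : ∀ x ∈ C, f a ≤ f x
  eventually_mem : ∀ w, 0 < f w → ∀ᶠ ε in 𝓝[>] (0 : ℝ), a + ε • w ∈ C

namespace HasTangentHalfSpace

theorem smul {C : Set V} {a : V} {f : V →ₗ[ℝ] ℝ} (hf : HasTangentHalfSpace C a f) {c : ℝ}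
    (hc : 0 < c) : HasTangentHalfSpace C a (c • f) where
  ne_zero := smul_ne_zero hc.ne' hf.ne_zero
  le x hx := mul_le_mul_of_nonneg_left (hf.le x hx) hc.le
  eventually_mem w hw := hf.eventually_mem w (pos_of_mul_pos_right hw hc.le)

theorem preimage {C : Set W} {a : V} {e : V →ₗ[ℝ] W} {f : W →ₗ[ℝ] ℝ}
    (he : Function.Surjective e) (hf : HasTangentHalfSpace C (e a) f) :
    HasTangentHalfSpace (e ⁻¹' C) a (f ∘ₗ e) where
  ne_zero h := hf.ne_zero <| (LinearMap.cancel_right he).1 (by rw [h, LinearMap.zero_comp])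
  le x hx := hf.le (e x) hx
  eventually_mem w hw := by
    simpa only [Set.mem_preimage, map_add, map_smul] using hf.eventually_mem (e w) hw

theorem apply_self_eq_zero {C : Set V} {a : V} {f : V →ₗ[ℝ] ℝ} (hf : HasTangentHalfSpace C a f)
    (ha : ∀ t : ℝ, 0 ≤ t → t • a ∈ C) : f a = 0 := by
  have hle_zero := hf.le _ (ha 0 le_rfl)
  have hle_two := hf.le _ (ha 2 zero_le_two)
  rw [map_smul, smul_eq_mul] at hle_zero hle_two
  linarith

theorem lt_of_mem_interior [TopologicalSpace V] [ContinuousAdd V] [ContinuousSMul ℝ V] {C : Set V}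
    {a x : V} {f : V →ₗ[ℝ] ℝ} (hf : HasTangentHalfSpace C a f) (hx : x ∈ interior C) :
    f a < f x := by
  obtain ⟨p, hp⟩ := f.surjective hf.ne_zero (-1)
  have hcont : Continuous fun ε : ℝ => x + ε • p := by fun_prop
  have hmem : ∀ᶠ ε in 𝓝[>] (0 : ℝ), x + ε • p ∈ C :=
    eventually_nhdsWithin_of_eventually_nhds <|
      hcont.continuousAt.eventually_mem (by simpa using mem_interior_iff_mem_nhds.1 hx)
  obtain ⟨ε, hε, hε0⟩ := (hmem.and self_mem_nhdsWithin).exists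
  have hle := hf.le _ hε
  rw [map_add, map_smul, hp, smul_eq_mul] at hle
  linarith [show 0 < ε from hε0]

end HasTangentHalfSpace

theorem exists_add_neg_of_apply_ne_zero {f g : V →ₗ[ℝ] ℝ} {p u : V} (hp : 0 < f p)
    (hfu : f u = 0) (hgu : g u ≠ 0) :
    ∃ w₁ w₂, 0 < f w₁ ∧ 0 < g w₂ ∧ f (w₁ + w₂) < 0 ∧ g (w₁ + w₂) < 0 := by
  refine ⟨p - ((g p + 2) / g u) • u, ((2 * g p + 1) / g u) • u - (2 : ℝ) • p, ?_, ?_, ?_, ?_⟩ <;>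
    simp only [map_add, map_sub, map_smul, smul_eq_mul, hfu, div_mul_cancel₀ _ hgu] <;> linarith

/-- To first order `E` is the union of the two half-spaces at `a`, and a union of two half-spaces
with non-parallel boundaries is not convex. -/
theorem HasTangentHalfSpace.ker_le_ker [TopologicalSpace V] [ContinuousAdd V]
    [ContinuousSMul ℝ V] {C D E : Set V} {a : V} {f g : V →ₗ[ℝ] ℝ}
    (hf : HasTangentHalfSpace C a f) (hg : HasTangentHalfSpace D a g) (hE : Convex ℝ E)
    (hECD : ∀ᶠ x in 𝓝 a, x ∈ E ↔ x ∈ C ∨ x ∈ D) : f.ker ≤ g.ker := by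
  have hnear : ∀ w : V, ∀ᶠ ε in 𝓝[>] (0 : ℝ), a + ε • w ∈ E ↔ a + ε • w ∈ C ∨ a + ε • w ∈ D := by
    intro w
    have hcont : Continuous fun ε : ℝ => a + ε • w := by fun_prop
    exact (tendsto_nhdsWithin_of_tendsto_nhds
      (by simpa using hcont.tendsto 0)).eventually hECD
  intro u hfu
  by_contra hgu
  obtain ⟨p, hp⟩ := f.surjective hf.ne_zero 1
  obtain ⟨w₁, w₂, hw₁, hw₂, hfw, hgw⟩ :=
    exists_add_neg_of_apply_ne_zero (f := f) (hp ▸ one_pos) hfu hgu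
  obtain ⟨ε, h₁, h₂, hn₁, hn₂, hn, hε⟩ := ((hf.eventually_mem w₁ hw₁).and <|
    (hg.eventually_mem w₂ hw₂).and <| (hnear w₁).and <| (hnear w₂).and <|
    (hnear ((1 / 2 : ℝ) • (w₁ + w₂))).and self_mem_nhdsWithin).exists
  have hmid : a + ε • (1 / 2 : ℝ) • (w₁ + w₂) ∈ E := by
    convert hE (hn₁.2 (.inl h₁)) (hn₂.2 (.inr h₂)) (by norm_num : (0 : ℝ) ≤ 1 / 2)
      (by norm_num : (0 : ℝ) ≤ 1 / 2) (by norm_num) using 1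
    module
  have hneg : ∀ r : ℝ, r < 0 → ε * (1 / 2 * r) < 0 := fun r hr =>
    mul_neg_of_pos_of_neg hε (by linarith)
  rcases hn.1 hmid with hC | hD
  · have hle := hf.le _ hC
    rw [map_add, map_smul, map_smul, smul_eq_mul, smul_eq_mul] at hle
    linarith [hneg _ hfw]
  · have hle := hg.le _ hD
    rw [map_add, map_smul, map_smul, smul_eq_mul, smul_eq_mul] at hle
    linarith [hneg _ hgw]

theorem HasTangentHalfSpace.exists_eq_smul [TopologicalSpace V] [ContinuousAdd V]
    [ContinuousSMul ℝ V] {C D E : Set V} {a : V} {f g : V →ₗ[ℝ] ℝ}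
    (hf : HasTangentHalfSpace C a f) (hg : HasTangentHalfSpace D a g) (hE : Convex ℝ E)
    (hECD : ∀ᶠ x in 𝓝 a, x ∈ E ↔ x ∈ C ∨ x ∈ D) : ∃ c : ℝ, g = c • f := by
  have hspan : g ∈ Submodule.span ℝ (Set.range fun _ : Unit => f) :=
    mem_span_of_iInf_ker_le_ker (by simpa only [iInf_const] using hf.ker_le_ker hg hE hECD)
  rw [Set.range_const, Submodule.mem_span_singleton] at hspan
  exact hspan.imp fun _ => Eq.symm

end TangentHalfSpace

section InnerProductSpace

variable {F : Type*} [NormedAddCommGroup F] [InnerProductSpace ℝ F]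

theorem eventually_add_smul_mem_ball {o a w : F} (hw : 0 < inner ℝ (o - a) w) :
    ∀ᶠ ε in 𝓝[>] (0 : ℝ), a + ε • w ∈ ball o (dist o a) := by
  have hcont : Continuous fun ε : ℝ => 2 * inner ℝ (o - a) w - ε * ‖w‖ ^ 2 := by fun_prop
  have hpos : ∀ᶠ ε in 𝓝 (0 : ℝ), 0 < 2 * inner ℝ (o - a) w - ε * ‖w‖ ^ 2 :=
    (hcont.tendsto 0).eventually_const_lt (by simpa using hw)
  filter_upwards [eventually_nhdsWithin_of_eventually_nhds hpos, self_mem_nhdsWithin]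
    with ε hε hε0
  rw [mem_ball', dist_eq_norm, dist_eq_norm, ← sub_sub]
  refine lt_of_pow_lt_pow_left₀ 2 (norm_nonneg _) ?_
  rw [norm_sub_sq_real, norm_smul, inner_smul_right, mul_pow, Real.norm_eq_abs, sq_abs]
  linarith [mul_pos (Set.mem_Ioi.1 hε0) hε]

theorem hasTangentHalfSpace_of_ball_subset {C : Set F} (hC : Convex ℝ C) {o a : F} (hoa : o ≠ a)
    (hball : ball o (dist o a) ⊆ C) (ha : a ∉ interior C) :
    HasTangentHalfSpace C a (innerₛₗ ℝ (o - a)) where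
  ne_zero h := hoa <| sub_eq_zero.1 <| inner_self_eq_zero.1 (DFunLike.congr_fun h (o - a))
  le x hx := by
    by_contra! hlt
    have hw : 0 < inner ℝ (o - a) (a - x) := by
      rw [inner_sub_right]
      exact sub_pos.2 hlt
    obtain ⟨ε, hε, hε0⟩ := ((eventually_add_smul_mem_ball hw).and self_mem_nhdsWithin).exists
    have hε_pos : 0 < 1 + ε := add_pos one_pos hε0
    have hint : a + ε • (a - x) ∈ interior C := interior_maximal hball isOpen_ball hε
    refine ha <| hC.openSegment_interior_self_subset_interior hint hx
      ⟨1 / (1 + ε), ε / (1 + ε), div_pos one_pos hε_pos, div_pos hε0 hε_pos, by field_simp, ?_⟩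
    match_scalars
    · field_simp
    · field_simp
      ring
  eventually_mem _ hw := (eventually_add_smul_mem_ball hw).mono fun _ hε => hball hε

theorem frontier_subset_closure_hasTangentHalfSpace_of_innerProductSpace
    [FiniteDimensional ℝ F] {C : Set F} (hC : Convex ℝ C) (hint : (interior C).Nonempty) :
    frontier C ⊆ closure {a ∈ frontier C | ∃ f, HasTangentHalfSpace C a f} := by
  intro a₀ ha₀
  rw [Metric.mem_closure_iff]
  intro δ hδ
  have hcl : a₀ ∈ closure (interior C) := by
    rw [hC.closure_interior_eq_closure_of_nonempty_interior hint]
    exact ha₀.1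
  obtain ⟨o, ho, hoδ⟩ := Metric.mem_closure_iff.1 hcl (δ / 2) (half_pos hδ)
  obtain ⟨a, ha, hoa⟩ := isOpen_interior.isClosed_compl.exists_infDist_eq_dist ⟨a₀, ha₀.2⟩ o
  have hne : o ≠ a := by
    rintro rfl
    exact ha ho
  have hball : ball o (dist o a) ⊆ C := hoa ▸ ball_infDist_compl_subset.trans interior_subset
  have hacl : a ∈ closure C := by
    refine closure_mono hball ?_
    rw [closure_ball o (dist_ne_zero.2 hne), mem_closedBall']
  refine ⟨a, ⟨⟨hacl, ha⟩, _, hasTangentHalfSpace_of_ball_subset hC hne hball ha⟩, ?_⟩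
  calc dist a₀ a ≤ dist a₀ o + dist o a := dist_triangle _ _ _
    _ ≤ dist a₀ o + dist o a₀ := by gcongr; exact hoa ▸ infDist_le_dist_of_mem ha₀.2
    _ < δ := by rw [dist_comm o]; linarith

theorem exists_norm_eq_one_norm_smul_eq [Nontrivial F] (x : F) :
    ∃ e : F, ‖e‖ = 1 ∧ ‖x‖ • e = x := by
  rcases eq_or_ne x 0 with rfl | hx
  · obtain ⟨e, he⟩ := exists_norm_eq F zero_le_one
    exact ⟨e, he, by rw [norm_zero, zero_smul]⟩
  · exact ⟨‖x‖⁻¹ • x, norm_smul_inv_norm (𝕜 := ℝ) hx, smul_inv_smul₀ (norm_ne_zero_iff.2 hx) x⟩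

end InnerProductSpace

section TopologicalVectorSpace

variable {V : Type*} [AddCommGroup V] [Module ℝ V] [TopologicalSpace V]

theorem frontier_subset_closure_hasTangentHalfSpace_of_equiv {F : Type*} [NormedAddCommGroup F]
    [InnerProductSpace ℝ F] [FiniteDimensional ℝ F] (e : F ≃L[ℝ] V) {C : Set V} (hC : Convex ℝ C)
    (hint : (interior C).Nonempty) :
    frontier C ⊆ closure {a ∈ frontier C | ∃ f, HasTangentHalfSpace C a f} := by
  have hpre : e.symm ⁻¹' (e ⁻¹' C) = C := e.symm_preimage_preimage C
  have hfr : e ⁻¹' frontier C = frontier (e ⁻¹' C) := e.toHomeomorph.preimage_frontier C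
  have hint_pre : (interior (e ⁻¹' C)).Nonempty := by
    have heq : e ⁻¹' interior C = interior (e ⁻¹' C) := e.toHomeomorph.preimage_interior C
    exact heq ▸ hint.preimage e.surjective
  have hdense : frontier (e ⁻¹' C) ⊆ _ :=
    frontier_subset_closure_hasTangentHalfSpace_of_innerProductSpace
      (hC.linear_preimage (e : F →ₗ[ℝ] V)) hint_pre
  rw [← hfr] at hdense
  intro a ha
  obtain ⟨b, rfl⟩ := e.surjective a
  refine map_mem_closure e.continuous (hdense ha) ?_
  rintro b ⟨hb, f, hf⟩
  refine ⟨hb, f ∘ₗ (e.symm : V →ₗ[ℝ] F), hpre ▸ ?_⟩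
  exact HasTangentHalfSpace.preimage (e := (e.symm : V →ₗ[ℝ] F)) e.symm.surjective
    (by simpa using hf)

theorem frontier_subset_closure_hasTangentHalfSpace [IsTopologicalAddGroup V]
    [ContinuousSMul ℝ V] [T2Space V] [FiniteDimensional ℝ V] {C : Set V} (hC : Convex ℝ C)
    (hint : (interior C).Nonempty) :
    frontier C ⊆ closure {a ∈ frontier C | ∃ f, HasTangentHalfSpace C a f} :=
  frontier_subset_closure_hasTangentHalfSpace_of_equiv toEuclidean.symm hC hint

theorem exists_mem_segment_frontier [ContinuousAdd V] [ContinuousSMul ℝ V] {C : Set V} {o x : V}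
    (ho : o ∈ C) (hx : x ∉ C) : ∃ y ∈ segment ℝ o x, y ∈ frontier C := by
  by_contra! hdisj
  have hcover : segment ℝ o x ⊆ interior C ∪ (closure C)ᶜ := by
    intro y hy
    by_contra h
    rw [Set.mem_union, not_or, Set.mem_compl_iff, not_not] at h
    exact hdisj y hy ⟨h.2, h.1⟩
  have hoC : o ∈ interior C := (hcover (left_mem_segment ℝ o x)).resolve_right
    (fun h => h (subset_closure ho))
  have hxC : x ∈ (closure C)ᶜ := (hcover (right_mem_segment ℝ o x)).resolve_left
    (fun h => hx (interior_subset h))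
  obtain ⟨y, -, hyi, hyc⟩ := (convex_segment o x).isPreconnected _ _ isOpen_interior
    isClosed_closure.isOpen_compl hcover ⟨o, left_mem_segment ℝ o x, hoC⟩
    ⟨x, right_mem_segment ℝ o x, hxC⟩
  exact hyc (subset_closure (interior_subset hyi))

end TopologicalVectorSpace

/-- Going around the triangle `i, j, k` shows that the factor relating `f j - f i` to `p j - p i`
is the same for all pairs. -/
theorem exists_eq_smul_add_of_sub_eq_smul {ι V : Type*} [AddCommGroup V] [Module ℝ V]
    {p f : ι → V}
    (hp : ∀ i j k, p i ≠ p j → p i ≠ p k → p j ≠ p k →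
      LinearIndependent ℝ ![p j - p i, p k - p i])
    (hf : ∀ i j, ∃ r : ℝ, f j - f i = r • (p j - p i)) :
    ∃ (c : ℝ) (w : V), ∀ i, f i = c • p i + w := by
  have hf_eq : ∀ i j, p i = p j → f j = f i := by
    intro i j hij
    obtain ⟨r, hr⟩ := hf i j
    rwa [hij, sub_self, smul_zero, sub_eq_zero] at hr
  by_cases! hconst : ∀ i j, p i = p j
  · rcases isEmpty_or_nonempty ι with _ | ⟨⟨i₀⟩⟩
    · exact ⟨0, 0, isEmptyElim⟩
    · exact ⟨0, f i₀, fun k => by rw [hf_eq i₀ k (hconst i₀ k), zero_smul, zero_add]⟩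
  · obtain ⟨i, j, hij⟩ := hconst
    obtain ⟨r, hr⟩ := hf i j
    refine ⟨r, f i - r • p i, fun k => ?_⟩
    suffices hk : f k - f i = r • (p k - p i) by
      rw [smul_sub] at hk
      rw [← sub_add_cancel (f k) (f i), hk]
      abel
    by_cases hik : p i = p k
    · rw [hf_eq i k hik, hik, sub_self, sub_self, smul_zero]
    by_cases hjk : p j = p k
    · rw [hf_eq j k hjk, ← hjk, hr]
    obtain ⟨s, hs⟩ := hf i k
    obtain ⟨t, ht⟩ := hf j k
    have hrel : (t - r) • (p j - p i) + (s - t) • (p k - p i) = 0 := by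
      calc (t - r) • (p j - p i) + (s - t) • (p k - p i)
          = s • (p k - p i) - r • (p j - p i) - t • (p k - p j) := by module
        _ = 0 := by rw [← hs, ← hr, ← ht]; abel
    obtain ⟨htr, hst⟩ := LinearIndependent.pair_iff.1 (hp i j k hij hik hjk) _ _ hrel
    rw [hs, sub_eq_zero.1 hst, sub_eq_zero.1 htr]

section Bform

variable {n : ℕ}

theorem Bform_comm (x y : Amb n) : Bform x y = Bform y x := by
  rw [Bform, Bform, mul_comm, real_inner_comm]

theorem Bform_add_left (x y z : Amb n) : Bform (x + y) z = Bform x z + Bform y z := by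
  simp only [Bform, Prod.fst_add, Prod.snd_add, inner_add_left]
  ring

theorem Bform_smul_left (t : ℝ) (x z : Amb n) : Bform (t • x) z = t * Bform x z := by
  simp only [Bform, Prod.smul_fst, Prod.smul_snd, real_inner_smul_left, smul_eq_mul]
  ring

theorem Bform_add_right (x y z : Amb n) : Bform x (y + z) = Bform x y + Bform x z := by
  rw [Bform_comm, Bform_add_left, Bform_comm y, Bform_comm z]

theorem Bform_smul_right (t : ℝ) (x z : Amb n) : Bform x (t • z) = t * Bform x z := by
  rw [Bform_comm, Bform_smul_left, Bform_comm z]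

/-- `Bform` as a bilinear form. -/
def lorentzForm (n : ℕ) : LinearMap.BilinForm ℝ (Amb n) :=
  LinearMap.mk₂ ℝ Bform Bform_add_left Bform_smul_left Bform_add_right Bform_smul_right

theorem lorentzForm_apply (x y : Amb n) : lorentzForm n x y = Bform x y := rfl

theorem Bform_sub_left (x y z : Amb n) : Bform (x - y) z = Bform x z - Bform y z :=
  (lorentzForm n).map_sub₂ x y z

theorem Bform_sub_right (x y z : Amb n) : Bform x (y - z) = Bform x y - Bform x z :=
  (lorentzForm n x).map_sub y z

theorem Bform_neg_left (x y : Amb n) : Bform (-x) y = -Bform x y :=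
  (lorentzForm n).map_neg₂ x y

theorem Bform_neg_right (x y : Amb n) : Bform x (-y) = -Bform x y :=
  (lorentzForm n x).map_neg y

@[fun_prop]
theorem continuous_Bform {X : Type*} [TopologicalSpace X] {f g : X → Amb n} (hf : Continuous f)
    (hg : Continuous g) : Continuous fun x => Bform (f x) (g x) := by
  unfold Bform
  fun_prop

theorem Bform_self (x : Amb n) : Bform x x = x.1 ^ 2 - ‖x.2‖ ^ 2 := by
  rw [Bform, real_inner_self_eq_norm_sq, pow_two x.1]

theorem lorentzForm_nondegenerate (n : ℕ) : (lorentzForm n).Nondegenerate := by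
  refine (LinearMap.IsRefl.nondegenerate_iff_separatingLeft
    fun x y h => (Bform_comm y x).trans h).2 fun x hx => ?_
  have hpos : x.1 ^ 2 + ‖x.2‖ ^ 2 = 0 := by
    simpa [lorentzForm_apply, Bform, sq] using hx (x.1, -x.2)
  have hfst : x.1 = 0 := by nlinarith
  have hsnd : ‖x.2‖ = 0 := by nlinarith
  exact Prod.ext hfst (norm_eq_zero.1 hsnd)

theorem exists_lorentzForm_eq (f : Amb n →ₗ[ℝ] ℝ) : ∃ N, lorentzForm n N = f :=
  ((lorentzForm n).toDual (lorentzForm_nondegenerate n)).surjective f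

theorem lorentzForm_injective (n : ℕ) : Function.Injective (lorentzForm n) :=
  ((lorentzForm n).toDual (lorentzForm_nondegenerate n)).injective

theorem norm_snd_le_fst {z : Amb n} (hz : 0 ≤ z.1) (hzz : 0 ≤ Bform z z) : ‖z.2‖ ≤ z.1 := by
  rw [Bform_self] at hzz
  exact (sq_le_sq₀ (norm_nonneg _) hz).1 (sub_nonneg.1 hzz)

end Bform

namespace Hyp

variable {n : ℕ}

theorem fst_pos (x : Hyp n) : 0 < x.1.1 := one_pos.trans_le x.2.1

theorem Bform_self (x : Hyp n) : Bform (x : Amb n) x = 1 := by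
  rw [_root_.Bform_self, x.2.2]

theorem norm_snd_le_fst (x : Hyp n) : ‖x.1.2‖ ≤ x.1.1 :=
  _root_.norm_snd_le_fst x.fst_pos.le (by rw [x.Bform_self]; exact zero_le_one)

theorem Bform_nonneg (a : Hyp n) {z : Amb n} (hz : 0 ≤ z.1) (hzz : 0 ≤ Bform z z) :
    0 ≤ Bform (a : Amb n) z := by
  have hinner : inner ℝ a.1.2 z.2 ≤ a.1.1 * z.1 :=
    (real_inner_le_norm _ _).trans <| mul_le_mul a.norm_snd_le_fst
      (_root_.norm_snd_le_fst hz hzz) (norm_nonneg _) a.fst_pos.le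
  exact sub_nonneg.2 hinner

theorem fst_pos_of_Bform_pos (a : Hyp n) {z : Amb n} (hzz : 0 ≤ Bform z z)
    (haz : 0 < Bform (a : Amb n) z) : 0 < z.1 := by
  by_contra! hz
  have hneg := a.Bform_nonneg (z := -z) (neg_nonneg.2 hz)
    (by rwa [Bform_neg_left, Bform_neg_right, neg_neg])
  rw [Bform_neg_right] at hneg
  linarith

theorem Bform_self_neg_of_perp (a : Hyp n) {u : Amb n} (hu : u ≠ 0)
    (hau : Bform (a : Amb n) u = 0) : Bform u u < 0 := by
  rw [_root_.Bform_self, sub_neg]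
  have hinner : a.1.1 * u.1 = inner ℝ a.1.2 u.2 := sub_eq_zero.1 hau
  have hcs : (a.1.1 * u.1) ^ 2 ≤ ‖a.1.2‖ ^ 2 * ‖u.2‖ ^ 2 := by
    rw [hinner, ← mul_pow, ← sq_abs]
    gcongr
    exact abs_real_inner_le_norm _ _
  have ha : a.1.1 ^ 2 = 1 + ‖a.1.2‖ ^ 2 := by linarith [a.2.2]
  by_contra! hle
  have hfst : u.1 = 0 := by nlinarith
  have hsnd : ‖u.2‖ = 0 := by nlinarith
  exact hu (Prod.ext hfst (norm_eq_zero.1 hsnd))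

theorem eq_of_smul_eq_smul {x y : Hyp n} {s t : ℝ} (hs : 0 < s) (ht : 0 ≤ t)
    (h : s • (x : Amb n) = t • (y : Amb n)) : x = y := by
  have hst : s ^ 2 = t ^ 2 := by
    have hB := congrArg (fun p => Bform p p) h
    simpa only [Bform_smul_left, Bform_smul_right, Bform_self, mul_one, ← sq] using hB
  obtain rfl : s = t := (sq_eq_sq₀ hs.le ht).1 hst
  exact Subtype.ext (smul_right_injective _ hs.ne' h)

/-- Expand `y` along `x` and its orthogonal complement, where the form is negative. -/
theorem one_lt_Bform {x y : Hyp n} (hxy : x ≠ y) : 1 < Bform (x : Amb n) y := by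
  have hperp : Bform (x : Amb n) (y - Bform (x : Amb n) y • (x : Amb n)) = 0 := by
    rw [Bform_sub_right, Bform_smul_right, x.Bform_self, mul_one, sub_self]
  have hnonneg : 0 ≤ Bform (x : Amb n) y :=
    x.Bform_nonneg y.fst_pos.le (zero_le_one.trans_eq y.Bform_self.symm)
  have hne : (y : Amb n) - Bform (x : Amb n) y • (x : Amb n) ≠ 0 := fun h =>
    hxy.symm <| eq_of_smul_eq_smul one_pos hnonneg ((one_smul ℝ _).trans (sub_eq_zero.1 h))
  have hneg := x.Bform_self_neg_of_perp hne hperp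
  rw [Bform_sub_left, Bform_smul_left, hperp, mul_zero, sub_zero, Bform_sub_right,
    Bform_smul_right, y.Bform_self, Bform_comm (y : Amb n) x] at hneg
  nlinarith

theorem one_le_Bform (x y : Hyp n) : 1 ≤ Bform (x : Amb n) y := by
  rcases eq_or_ne x y with rfl | hxy
  · exact x.Bform_self.ge
  · exact (one_lt_Bform hxy).le

theorem exists_coe_eq {y : Amb n} (hpos : 0 < y.1) (hy : Bform y y = 1) :
    ∃ k : Hyp n, (k : Amb n) = y := by
  have hnorm : y.1 ^ 2 - ‖y.2‖ ^ 2 = 1 := by rw [← _root_.Bform_self, hy]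
  refine ⟨⟨y, ?_, hnorm⟩, rfl⟩
  nlinarith [sq_nonneg ‖y.2‖]

theorem exists_coe_eq_inv_sqrt_smul {y : Amb n} (hpos : 0 < y.1) (hy : 0 < Bform y y) :
    ∃ k : Hyp n, (k : Amb n) = (√(Bform y y))⁻¹ • y := by
  have hsqrt : 0 < √(Bform y y) := Real.sqrt_pos.2 hy
  refine exists_coe_eq (mul_pos (inv_pos.2 hsqrt) hpos) ?_
  rw [Bform_smul_left, Bform_smul_right, ← mul_assoc, ← mul_inv, Real.mul_self_sqrt hy.le,
    inv_mul_cancel₀ hy.ne']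

theorem Bform_sub_self (a b : Hyp n) :
    Bform (b.1 - a.1) (b.1 - a.1) = 2 * (1 - Bform (a : Amb n) b) := by
  simp only [Bform_sub_left, Bform_sub_right, Bform_self, Bform_comm (b : Amb n) a]
  ring

/-- A line meets the hyperboloid in at most two points. -/
theorem linearIndependent_sub {a b x : Hyp n} (hab : a ≠ b) (hax : a ≠ x) (hbx : b ≠ x) :
    LinearIndependent ℝ ![b.1 - a.1, x.1 - a.1] := by
  have hba : b.1 - a.1 ≠ 0 := fun h => hab (Subtype.ext (sub_eq_zero.1 h)).symm
  rw [LinearIndependent.pair_iff' hba]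
  intro r hr
  have hx : (x : Amb n) = a + r • (b.1 - a.1) := by rw [hr, add_sub_cancel]
  have hroot : r * (1 - r) * (Bform (a : Amb n) b - 1) = 0 := by
    have hxx := x.Bform_self
    rw [hx] at hxx
    simp only [Bform_add_left, Bform_add_right, Bform_smul_left, Bform_smul_right, Bform_sub_left,
      Bform_sub_right, Bform_self, Bform_comm (b : Amb n) a] at hxx
    linarith
  rcases mul_eq_zero.1 ((mul_eq_zero.1 hroot).resolve_right
    (sub_pos.2 (one_lt_Bform hab)).ne') with rfl | h
  · exact hax (Subtype.ext (by rw [hx, zero_smul, add_zero]))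
  · obtain rfl : r = 1 := by linarith
    exact hbx (Subtype.ext (by rw [hx, one_smul, add_sub_cancel]))

/-- The point of the hyperboloid above `y`. -/
def ofSnd (y : EuclideanSpace ℝ (Fin n)) : Hyp n :=
  ⟨(√(1 + ‖y‖ ^ 2), y), Real.one_le_sqrt.2 (by linarith [sq_nonneg ‖y‖]), by
    rw [Real.sq_sqrt (by positivity), add_sub_cancel_right]⟩

theorem norm_lt_fst_ofSnd (y : EuclideanSpace ℝ (Fin n)) : ‖y‖ < (ofSnd y).1.1 :=
  Real.lt_sqrt_of_sq_lt (lt_one_add _)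

theorem exists_forall_Bform_le {K : Set (Hyp n)} (hK : IsCompact K) (z : Amb n) :
    ∃ R : ℝ, ∀ x ∈ K, Bform (x : Amb n) z ≤ R := by
  obtain ⟨R, hR⟩ := (hK.image (f := fun x : Hyp n => Bform (x : Amb n) z) (by fun_prop)).bddAbove
  exact ⟨R, fun x hx => hR ⟨x, hx, rfl⟩⟩

theorem exists_forall_lt_Bform [NeZero n] {K : Set (Hyp n)} (hK : IsCompact K) (R : ℝ) :
    ∃ p : Hyp n, ∀ x ∈ K, R < Bform (x : Amb n) p := by
  obtain ⟨C, hC⟩ := (hK.image (f := fun x : Hyp n => x.1.1 + ‖x.1.2‖) (by fun_prop)).bddAbove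
  obtain ⟨y, hy⟩ := exists_norm_eq (EuclideanSpace ℝ (Fin n)) (abs_nonneg (R * C))
  refine ⟨ofSnd y, fun x hx => ?_⟩
  have hsum : 0 < x.1.1 + ‖x.1.2‖ := add_pos_of_pos_of_nonneg x.fst_pos (norm_nonneg _)
  have hle : x.1.1 + ‖x.1.2‖ ≤ C := hC ⟨x, hx, rfl⟩
  have hT : |R * C| < (ofSnd y).1.1 := hy ▸ norm_lt_fst_ofSnd y
  have hinner : inner ℝ x.1.2 y ≤ ‖x.1.2‖ * (ofSnd y).1.1 :=
    (real_inner_le_norm _ _).trans (by gcongr; exact (norm_lt_fst_ofSnd y).le)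
  refine lt_of_mul_lt_mul_right ?_ hsum.le
  calc R * (x.1.1 + ‖x.1.2‖) ≤ |R| * |C| :=
        mul_le_mul (le_abs_self R) (hle.trans (le_abs_self C)) hsum.le (abs_nonneg R)
    _ = |R * C| := (abs_mul R C).symm
    _ < (ofSnd y).1.1 := hT
    _ = (ofSnd y).1.1 * (x.1.1 ^ 2 - ‖x.1.2‖ ^ 2) := by rw [x.2.2, mul_one]
    _ = (x.1.1 * (ofSnd y).1.1 - ‖x.1.2‖ * (ofSnd y).1.1) * (x.1.1 + ‖x.1.2‖) := by ring
    _ ≤ Bform (x : Amb n) (ofSnd y) * (x.1.1 + ‖x.1.2‖) := by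
        gcongr
        exact sub_le_sub_left hinner _

end Hyp

section Reflection

variable {n : ℕ}

theorem hRefl_zero (x : Amb n) : hRefl 0 x = x := by
  rw [hRefl, smul_zero, sub_zero]

theorem Bform_hRefl_left (v x y : Amb n) : Bform (hRefl v x) y = Bform x (hRefl v y) := by
  simp only [hRefl, Bform_sub_left, Bform_sub_right, Bform_smul_left, Bform_smul_right,
    Bform_comm v y]
  ring

theorem hRefl_eq_self {v x : Amb n} (hxv : Bform x v = 0) : hRefl v x = x := by
  rw [hRefl, hxv, mul_zero, zero_div, zero_smul, sub_zero]

theorem hRefl_add (v x y : Amb n) : hRefl v (x + y) = hRefl v x + hRefl v y := by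
  simp only [hRefl, Bform_add_left, mul_add, add_div]
  module

theorem hRefl_smul (v : Amb n) (t : ℝ) (x : Amb n) : hRefl v (t • x) = t • hRefl v x := by
  simp only [hRefl, Bform_smul_left, mul_left_comm, mul_div_assoc]
  module

/-- `hRefl v` as a linear map. -/
def hReflLinear (v : Amb n) : Amb n →ₗ[ℝ] Amb n where
  toFun := hRefl v
  map_add' := hRefl_add v
  map_smul' := hRefl_smul v

theorem hReflLinear_apply (v x : Amb n) : hReflLinear v x = hRefl v x := rfl

theorem lorentzForm_comp_hReflLinear (v x : Amb n) :
    lorentzForm n x ∘ₗ hReflLinear v = lorentzForm n (hRefl v x) :=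
  LinearMap.ext fun y => (Bform_hRefl_left v x y).symm

/-- If `v` is lightlike, division by zero makes `hRefl v` the identity. -/
theorem hRefl_hRefl (v x : Amb n) : hRefl v (hRefl v x) = x := by
  rcases eq_or_ne (Bform v v) 0 with hv | hv
  · simp only [hRefl, hv, div_zero, zero_smul, sub_zero]
  · simp only [hRefl, Bform_sub_left, Bform_smul_left, div_mul_cancel₀ _ hv]
    match_scalars
    · rfl
    · field_simp
      ring

theorem Bform_hRefl_hRefl (v x y : Amb n) : Bform (hRefl v x) (hRefl v y) = Bform x y := by
  rw [Bform_hRefl_left, hRefl_hRefl]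

theorem Bform_hRefl_self {v : Amb n} (hv : Bform v v ≠ 0) (x : Amb n) :
    Bform (hRefl v x) v = -Bform x v := by
  rw [hRefl, Bform_sub_left, Bform_smul_left, div_mul_cancel₀ _ hv]
  ring

theorem exists_coe_eq_hRefl {v : Amb n} (hv : Bform v v < 0) (k : Hyp n) :
    ∃ l : Hyp n, (l : Amb n) = hRefl v k := by
  have hself : Bform (hRefl v k) (hRefl v k) = 1 := by rw [Bform_hRefl_hRefl, k.Bform_self]
  have hpos : 0 < Bform (k : Amb n) (hRefl v k) := by
    rw [hRefl, Bform_sub_right, Bform_smul_right, k.Bform_self]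
    have hnonpos : 2 * Bform (k : Amb n) v / Bform v v * Bform (k : Amb n) v ≤ 0 := by
      rw [div_mul_eq_mul_div, mul_assoc]
      exact div_nonpos_of_nonneg_of_nonpos
        (mul_nonneg zero_le_two (mul_self_nonneg _)) hv.le
    linarith
  exact Hyp.exists_coe_eq (k.fst_pos_of_Bform_pos (zero_le_one.trans_eq hself.symm) hpos) hself

theorem hRefl_sub_apply (a b : Hyp n) : hRefl (b.1 - a.1) a = b := by
  rcases eq_or_ne a b with rfl | hab
  · rw [sub_self, hRefl_zero]
  · have hne : 1 - Bform (a : Amb n) b ≠ 0 := (sub_neg.2 (Hyp.one_lt_Bform hab)).ne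
    rw [hRefl, Hyp.Bform_sub_self, Bform_sub_right, a.Bform_self, ← neg_sub 1, mul_neg, neg_div,
      div_self (mul_ne_zero two_ne_zero hne)]
    module

end Reflection

section Cone

variable {n : ℕ}

/-- The cone over `K`; `HConvex K` says that it is convex. -/
def hcone (K : Set (Hyp n)) : Set (Amb n) :=
  {p | ∃ t : ℝ, 0 ≤ t ∧ ∃ x ∈ K, p = t • (x : Amb n)}

theorem smul_coe_mem_hcone_iff {K : Set (Hyp n)} {s : ℝ} (hs : 0 < s) {x : Hyp n} :
    s • (x : Amb n) ∈ hcone K ↔ x ∈ K := by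
  refine ⟨?_, fun hx => ⟨s, hs.le, x, hx, rfl⟩⟩
  rintro ⟨t, ht, y, hy, h⟩
  rwa [Hyp.eq_of_smul_eq_smul hs ht h]

theorem smul_mem_hcone {K : Set (Hyp n)} {x : Hyp n} (hx : x ∈ K) {t : ℝ} (ht : 0 ≤ t) :
    t • (x : Amb n) ∈ hcone K :=
  ⟨t, ht, x, hx, rfl⟩

theorem smul_mem_hcone_iff {K : Set (Hyp n)} {s : ℝ} (hs : 0 < s) {p : Amb n} :
    s • p ∈ hcone K ↔ p ∈ hcone K := by
  constructor
  · rintro ⟨t, ht, x, hx, h⟩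
    refine ⟨s⁻¹ * t, by positivity, x, hx, ?_⟩
    rw [mul_smul, ← h, inv_smul_smul₀ hs.ne']
  · rintro ⟨t, ht, x, hx, rfl⟩
    exact ⟨s * t, by positivity, x, hx, smul_smul _ _ _⟩

theorem mem_hcone_twoPointSym_iff {K : Set (Hyp n)} {v x : Amb n} (hv : Bform v v < 0)
    (hx : 0 < Bform x v) :
    x ∈ hcone (hTwoPointSym v K) ↔ x ∈ hcone K ∨ hRefl v x ∈ hcone K := by
  constructor
  · rintro ⟨t, ht, y, hy, rfl⟩
    rw [Bform_smul_left] at hx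
    rcases hy with ⟨-, hyK | ⟨k, hk, hky⟩⟩ | ⟨hneg, -⟩
    · exact .inl (smul_mem_hcone hyK ht)
    · exact .inr ⟨t, ht, k, hk, by rw [hRefl_smul, hky]⟩
    · exact absurd hneg (pos_of_mul_pos_right hx ht).not_ge
  · rintro (⟨t, ht, y, hy, rfl⟩ | ⟨t, ht, y, hy, h⟩)
    · rw [Bform_smul_left] at hx
      exact smul_mem_hcone (.inl ⟨(pos_of_mul_pos_right hx ht).le, .inl hy⟩) ht
    · obtain ⟨l, hl⟩ := exists_coe_eq_hRefl hv y
      obtain rfl : x = t • (l : Amb n) := by rw [hl, ← hRefl_smul, ← h, hRefl_hRefl]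
      rw [Bform_smul_left] at hx
      refine smul_mem_hcone (.inl ⟨(pos_of_mul_pos_right hx ht).le, .inr ⟨y, hy, ?_⟩⟩) ht
      rw [hl, hRefl_hRefl]

theorem twoPointSym_eq_self {K : Set (Hyp n)} {v : Amb n} (hv : Bform v v < 0)
    (hK : ∀ x ∈ K, 0 < Bform (x : Amb n) v) : hTwoPointSym v K = K := by
  ext x
  constructor
  · rintro (⟨hx, hxK | ⟨k, hk, hkx⟩⟩ | ⟨-, hxK, -⟩)
    · exact hxK
    · have hpos := hK k hk
      rw [hkx, Bform_hRefl_self hv.ne] at hpos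
      linarith
    · exact hxK
  · exact fun hx => .inl ⟨(hK x hx).le, .inl hx⟩

/-- Symmetrization in a hyperplane that does not meet `K` leaves `K` unchanged. -/
theorem hConvex_of_forall_twoPointSym [NeZero n] {K : Set (Hyp n)} (hK : IsCompact K)
    (hne : K.Nonempty) (hsym : ∀ v : Amb n, Bform v v < 0 → HConvex (hTwoPointSym v K)) :
    HConvex K := by
  obtain ⟨o, ho⟩ := hne
  obtain ⟨R, hR⟩ := Hyp.exists_forall_Bform_le hK o
  obtain ⟨p, hp⟩ := Hyp.exists_forall_lt_Bform hK R
  have hv : Bform (p.1 - o.1) (p.1 - o.1) < 0 := by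
    rw [Hyp.Bform_sub_self]
    linarith [hR o ho, hp o ho, o.Bform_self]
  have hpos : ∀ x ∈ K, 0 < Bform (x : Amb n) (p.1 - o.1) := by
    intro x hx
    rw [Bform_sub_right]
    linarith [hR x hx, hp x hx]
  exact twoPointSym_eq_self hv hpos ▸ hsym _ hv

theorem eventually_exists_smul_mem {U : Set (Hyp n)} {k : Hyp n} (hU : U ∈ 𝓝 k) {t : ℝ}
    (ht : 0 < t) : ∀ᶠ y in 𝓝 (t • (k : Amb n)), ∃ s : ℝ, 0 < s ∧ ∃ l ∈ U, y = s • (l : Amb n) := by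
  rw [nhds_subtype_eq_comap] at hU
  obtain ⟨V, hV, hVU⟩ := mem_comap.1 hU
  have hself : Bform (t • (k : Amb n)) (t • (k : Amb n)) = t ^ 2 := by
    rw [Bform_smul_left, Bform_smul_right, k.Bform_self, mul_one, sq]
  have hproj : ContinuousAt (fun y : Amb n => (√(Bform y y))⁻¹ • y) (t • (k : Amb n)) := by
    have hsqrt : Continuous fun y : Amb n => √(Bform y y) := by fun_prop
    refine (hsqrt.continuousAt.inv₀ ?_).smul continuousAt_id
    rw [hself, Real.sqrt_sq ht.le]
    exact ht.ne'
  have hmemV : ∀ᶠ y in 𝓝 (t • (k : Amb n)), (√(Bform y y))⁻¹ • y ∈ V := by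
    refine hproj.eventually_mem ?_
    rwa [hself, Real.sqrt_sq ht.le, inv_smul_smul₀ ht.ne']
  have htimelike : ∀ᶠ y in 𝓝 (t • (k : Amb n)), 0 < Bform y y := by
    have hcont : Continuous fun y : Amb n => Bform y y := by fun_prop
    exact (hcont.tendsto _).eventually_const_lt (hself ▸ sq_pos_of_pos ht)
  have hfuture : ∀ᶠ y in 𝓝 (t • (k : Amb n)), 0 < y.1 :=
    (continuous_fst.tendsto _).eventually_const_lt (mul_pos ht k.fst_pos)
  filter_upwards [hmemV, htimelike, hfuture] with y hyV hyy hy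
  obtain ⟨l, hl⟩ := Hyp.exists_coe_eq_inv_sqrt_smul hy hyy
  have hsqrt : 0 < √(Bform y y) := Real.sqrt_pos.2 hyy
  exact ⟨_, hsqrt, l, hVU (show (l : Amb n) ∈ V by rwa [hl]), by rw [hl, smul_inv_smul₀ hsqrt.ne']⟩

theorem smul_coe_mem_interior_iff {P : Set (Amb n)} {A : Set (Hyp n)}
    (hPA : ∀ s : ℝ, 0 < s → ∀ l : Hyp n, s • (l : Amb n) ∈ P ↔ l ∈ A) {t : ℝ} (ht : 0 < t)
    {k : Hyp n} : t • (k : Amb n) ∈ interior P ↔ k ∈ interior A := by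
  rw [mem_interior_iff_mem_nhds, mem_interior_iff_mem_nhds]
  constructor
  · intro hP
    have hcont : Continuous fun l : Hyp n => t • (l : Amb n) := by fun_prop
    filter_upwards [hcont.continuousAt.preimage_mem_nhds hP] with l hl
    exact (hPA t ht l).1 hl
  · intro hA
    filter_upwards [eventually_exists_smul_mem hA ht]
    rintro _ ⟨s, hs, l, hl, rfl⟩
    exact (hPA s hs l).2 hl

theorem smul_coe_mem_interior_hcone_iff {K : Set (Hyp n)} {t : ℝ} (ht : 0 < t) {k : Hyp n} :
    t • (k : Amb n) ∈ interior (hcone K) ↔ k ∈ interior K :=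
  smul_coe_mem_interior_iff (fun _ hs _ => smul_coe_mem_hcone_iff hs) ht

theorem smul_coe_mem_frontier_hcone_iff {K : Set (Hyp n)} {t : ℝ} (ht : 0 < t) {k : Hyp n} :
    t • (k : Amb n) ∈ frontier (hcone K) ↔ k ∈ frontier K := by
  rw [← not_iff_not, ← Set.mem_compl_iff, ← Set.mem_compl_iff, compl_frontier_eq_union_interior,
    compl_frontier_eq_union_interior, Set.mem_union, Set.mem_union,
    smul_coe_mem_interior_hcone_iff ht,
    smul_coe_mem_interior_iff (P := (hcone K)ᶜ) (A := Kᶜ)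
      (fun _ hs _ => (smul_coe_mem_hcone_iff hs).not) ht]

end Cone

section Chord

variable {n : ℕ} {K : Set (Hyp n)}

theorem exists_mem_frontier_eq_smul_add_smul {o x : Hyp n} (ho : o ∈ interior K) (hx : x ∉ K) :
    ∃ a ∈ frontier K, ∃ s t : ℝ, 0 ≤ s ∧ 0 < t ∧
      (a : Amb n) = s • (o : Amb n) + t • (x : Amb n) := by
  have hoC : (1 : ℝ) • (o : Amb n) ∈ hcone K := smul_mem_hcone (interior_subset ho) zero_le_one
  have hxC : (1 : ℝ) • (x : Amb n) ∉ hcone K := (smul_coe_mem_hcone_iff one_pos).not.2 hx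
  rw [one_smul] at hoC hxC
  obtain ⟨y, ⟨s, t, hs, ht, hst, hy⟩, hyF⟩ := exists_mem_segment_frontier hoC hxC
  have hself : 0 < Bform y y := by
    rw [← hy]
    simp only [Bform_add_left, Bform_add_right, Bform_smul_left, Bform_smul_right, Hyp.Bform_self,
      Bform_comm (x : Amb n) o]
    nlinarith [mul_nonneg (mul_nonneg hs ht) (sub_nonneg.2 (Hyp.one_le_Bform o x))]
  have hoy : 0 < Bform (o : Amb n) y := by
    rw [← hy, Bform_add_right, Bform_smul_right, Bform_smul_right, o.Bform_self]
    nlinarith [Hyp.one_le_Bform o x]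
  obtain ⟨a, ha⟩ := Hyp.exists_coe_eq_inv_sqrt_smul (o.fst_pos_of_Bform_pos hself.le hoy) hself
  have hsqrt : 0 < √(Bform y y) := Real.sqrt_pos.2 hself
  have hay : √(Bform y y) • (a : Amb n) = y := by rw [ha, smul_inv_smul₀ hsqrt.ne']
  have ht_ne : t ≠ 0 := by
    rintro rfl
    obtain rfl : s = 1 := by simpa using hst
    rw [zero_smul, add_zero] at hy
    exact ((smul_coe_mem_frontier_hcone_iff one_pos).1 (hy ▸ hyF)).2 ho
  refine ⟨a, (smul_coe_mem_frontier_hcone_iff hsqrt).1 (by rwa [hay]), (√(Bform y y))⁻¹ * s,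
    (√(Bform y y))⁻¹ * t, by positivity, by positivity, ?_⟩
  rw [ha, ← hy]
  module

theorem exists_mem_frontier_smul_add_smul_eq [NeZero n] (hK : IsCompact K) {o : Hyp n}
    (ho : o ∈ interior K) :
    ∃ a ∈ frontier K, ∃ b ∈ frontier K, ∃ s t : ℝ, 0 < s ∧ 0 < t ∧
      (o : Amb n) = s • (a : Amb n) + t • (b : Amb n) := by
  obtain ⟨R, hR⟩ := Hyp.exists_forall_Bform_le hK o
  obtain ⟨p, hp⟩ : ∃ p : Hyp n, R < Bform (o : Amb n) p := by
    simpa using Hyp.exists_forall_lt_Bform (isCompact_singleton (x := o)) R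
  have hop : 0 < Bform (o : Amb n) p := one_pos.trans_le (o.one_le_Bform p)
  obtain ⟨q, hq⟩ : ∃ q : Hyp n, (q : Amb n) = (2 * Bform (o : Amb n) p) • o.1 - p.1 := by
    have hself : Bform ((2 * Bform (o : Amb n) p) • o.1 - p.1)
        ((2 * Bform (o : Amb n) p) • o.1 - p.1) = 1 := by
      simp only [Bform_sub_left, Bform_sub_right, Bform_smul_left, Bform_smul_right,
        Hyp.Bform_self, Bform_comm (p : Amb n) o]
      ring
    refine Hyp.exists_coe_eq
      (o.fst_pos_of_Bform_pos (zero_le_one.trans_eq hself.symm) ?_) hself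
    rw [Bform_sub_right, Bform_smul_right, o.Bform_self]
    linarith
  have hoq : Bform (o : Amb n) q = Bform (o : Amb n) p := by
    rw [hq, Bform_sub_right, Bform_smul_right, o.Bform_self]
    ring
  have hpK : p ∉ K := fun h => (hR p h).not_gt (Bform_comm (o : Amb n) p ▸ hp)
  have hqK : q ∉ K := fun h => (hR q h).not_gt (by rwa [Bform_comm, hoq])
  obtain ⟨a, ha, s, t, hs, ht, hat⟩ := exists_mem_frontier_eq_smul_add_smul ho hpK
  obtain ⟨b, hb, s', t', hs', ht', hbt⟩ := exists_mem_frontier_eq_smul_add_smul ho hqK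
  have hD : 0 < t' * s + t * s' + 2 * t * t' * Bform (o : Amb n) p := by positivity
  refine ⟨a, ha, b, hb, _, _, div_pos ht' hD, div_pos ht hD, ?_⟩
  rw [hat, hbt, hq]
  match_scalars <;> field_simp <;> ring

end Chord

section UnitNormal

variable {n : ℕ} {K : Set (Hyp n)} {a b o : Hyp n} {N M : Amb n}

/-- `N` is the inward Lorentz unit normal of `K` at its smooth boundary point `a`. -/
structure IsUnitNormal (K : Set (Hyp n)) (a : Hyp n) (N : Amb n) : Prop where
  mem : a ∈ K
  unit : Bform N N = -1
  hasTangentHalfSpace : HasTangentHalfSpace (hcone K) (a : Amb n) (lorentzForm n N)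

namespace IsUnitNormal

theorem perp (hN : IsUnitNormal K a N) : Bform N a = 0 :=
  hN.hasTangentHalfSpace.apply_self_eq_zero fun _ => smul_mem_hcone hN.mem

theorem nonneg (hN : IsUnitNormal K a N) {x : Hyp n} (hx : x ∈ K) : 0 ≤ Bform N x := by
  have hle := hN.hasTangentHalfSpace.le _ (smul_mem_hcone hx zero_le_one)
  rwa [one_smul, lorentzForm_apply, lorentzForm_apply, hN.perp] at hle

theorem pos_of_mem_interior (hN : IsUnitNormal K a N) (ho : o ∈ interior K) : 0 < Bform N o := by
  have hlt := hN.hasTangentHalfSpace.lt_of_mem_interior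
    ((smul_coe_mem_interior_hcone_iff one_pos).2 ho)
  rwa [one_smul, lorentzForm_apply, lorentzForm_apply, hN.perp] at hlt

end IsUnitNormal

theorem exists_isUnitNormal (ha : a ∈ K) {s : ℝ} (hs : 0 < s) {f : Amb n →ₗ[ℝ] ℝ}
    (hf : HasTangentHalfSpace (hcone K) (s • (a : Amb n)) f) : ∃ N, IsUnitNormal K a N := by
  have hpre : LinearMap.lsmul ℝ (Amb n) s ⁻¹' hcone K = hcone K :=
    Set.ext fun _ => smul_mem_hcone_iff hs
  have hfa := hf.preimage (e := LinearMap.lsmul ℝ (Amb n) s) (MulAction.surjective₀ hs.ne')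
  rw [hpre] at hfa
  obtain ⟨N, hN⟩ := exists_lorentzForm_eq (f ∘ₗ LinearMap.lsmul ℝ (Amb n) s)
  rw [← hN] at hfa
  have hNa : Bform (a : Amb n) N = 0 := by
    rw [Bform_comm]
    exact hfa.apply_self_eq_zero fun _ => smul_mem_hcone ha
  have hN_ne : N ≠ 0 := by
    rintro rfl
    exact hfa.ne_zero (map_zero _)
  have hNN : 0 < -Bform N N := neg_pos.2 (a.Bform_self_neg_of_perp hN_ne hNa)
  refine ⟨(√(-Bform N N))⁻¹ • N, ha, ?_, ?_⟩
  · rw [Bform_smul_left, Bform_smul_right, ← mul_assoc, ← mul_inv, Real.mul_self_sqrt hNN.le,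
      inv_neg, neg_mul, inv_mul_cancel₀ (neg_pos.1 hNN).ne]
  · rw [map_smul]
    exact hfa.smul (inv_pos.2 (Real.sqrt_pos.2 hNN))

theorem frontier_subset_of_forall_isUnitNormal (hK : IsClosed K) (hconv : HConvex K)
    (hint : (interior K).Nonempty) {T : Set (Hyp n)} (hT : IsClosed T)
    (h : ∀ a N, IsUnitNormal K a N → a ∈ T) : frontier K ⊆ T := by
  intro k hk
  by_contra hkT
  have hkF : (1 : ℝ) • (k : Amb n) ∈ frontier (hcone K) :=
    (smul_coe_mem_frontier_hcone_iff one_pos).2 hk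
  have hint_cone : (interior (hcone K)).Nonempty :=
    ⟨_, (smul_coe_mem_interior_hcone_iff one_pos).2 hint.some_mem⟩
  obtain ⟨y, ⟨hy, f, hf⟩, s, hs, l, hl, rfl⟩ := ((mem_closure_iff_frequently.1
    (frontier_subset_closure_hasTangentHalfSpace hconv hint_cone hkF)).and_eventually
    (eventually_exists_smul_mem (hT.isOpen_compl.mem_nhds hkT) one_pos)).exists
  have hlK : l ∈ K := hK.frontier_subset ((smul_coe_mem_frontier_hcone_iff hs).1 hy)
  obtain ⟨N, hN⟩ := exists_isUnitNormal hlK hs hf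
  exact hl (h l N hN)

/-- Near `a`, the cone over the symmetrization in the hyperplane bisecting `a` and `b` is the
union of the cone over `K` and its mirror image, which are tangent at `a` to the half-spaces with
normals `N` and `hRefl (b - a) M`. -/
theorem IsUnitNormal.exists_hRefl_eq_smul (hK : HConvex K)
    (hsym : ∀ v : Amb n, Bform v v < 0 → HConvex (hTwoPointSym v K)) (hN : IsUnitNormal K a N)
    (hM : IsUnitNormal K b M) : ∃ c : ℝ, hRefl (b.1 - a.1) M = c • N := by
  obtain ⟨E, hE, hE_iff⟩ : ∃ E : Set (Amb n), Convex ℝ E ∧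
      ∀ᶠ x in 𝓝 (a : Amb n), x ∈ E ↔ x ∈ hcone K ∨ x ∈ hReflLinear (b.1 - a.1) ⁻¹' hcone K := by
    rcases eq_or_ne a b with rfl | hab
    · refine ⟨hcone K, hK, .of_forall fun x => ?_⟩
      rw [Set.mem_preimage, hReflLinear_apply, sub_self, hRefl_zero, or_self]
    · have hlt := Hyp.one_lt_Bform hab
      have hv : Bform (b.1 - a.1) (b.1 - a.1) < 0 := by
        rw [Hyp.Bform_sub_self]
        linarith
      have hav : 0 < Bform (a : Amb n) (b.1 - a.1) := by
        rwa [Bform_sub_right, a.Bform_self, sub_pos]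
      have hcont : Continuous fun x : Amb n => Bform x (b.1 - a.1) := by fun_prop
      refine ⟨hcone (hTwoPointSym (b.1 - a.1) K), hsym _ hv, ?_⟩
      filter_upwards [(hcont.tendsto _).eventually_const_lt hav] with x hx
      exact mem_hcone_twoPointSym_iff hv hx
  have hMa : HasTangentHalfSpace (hReflLinear (b.1 - a.1) ⁻¹' hcone K) (a : Amb n)
      (lorentzForm n (hRefl (b.1 - a.1) M)) := by
    rw [← lorentzForm_comp_hReflLinear]
    refine .preimage (Function.Involutive.surjective (hRefl_hRefl _)) ?_
    rw [hReflLinear_apply, hRefl_sub_apply]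
    exact hM.hasTangentHalfSpace
  obtain ⟨c, hc⟩ := hN.hasTangentHalfSpace.exists_eq_smul hMa hE hE_iff
  exact ⟨c, lorentzForm_injective n (by rw [hc, map_smul])⟩

theorem IsUnitNormal.eq_hRefl (hK : HConvex K) (ho : o ∈ interior K)
    (hsym : ∀ v : Amb n, Bform v v < 0 → HConvex (hTwoPointSym v K)) (hN : IsUnitNormal K a N)
    (hM : IsUnitNormal K b M) : M = hRefl (b.1 - a.1) N := by
  obtain ⟨c, hc⟩ := hN.exists_hRefl_eq_smul hK hsym hM
  have hM_eq : M = c • hRefl (b.1 - a.1) N := by rw [← hRefl_smul, ← hc, hRefl_hRefl]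
  have hc_sq : c * c = 1 := by
    have hunit := hM.unit
    rw [hM_eq, Bform_smul_left, Bform_smul_right, Bform_hRefl_hRefl, hN.unit] at hunit
    linarith
  rcases mul_self_eq_one_iff.1 hc_sq with rfl | rfl
  · rw [hM_eq, one_smul]
  · have hNb : Bform N b = 0 := by
      refine le_antisymm ?_ (hN.nonneg hM.mem)
      have hMa := hM.nonneg hN.mem
      rwa [hM_eq, Bform_smul_left, Bform_hRefl_left, hRefl_sub_apply, neg_one_mul,
        neg_nonneg] at hMa
    rw [hRefl_eq_self (by rw [Bform_sub_right, hNb, hN.perp, sub_zero])] at hM_eq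
    have hMo := hM.pos_of_mem_interior ho
    rw [hM_eq, Bform_smul_left] at hMo
    linarith [hN.pos_of_mem_interior ho]

theorem IsUnitNormal.exists_sub_eq_smul (hK : HConvex K) (ho : o ∈ interior K)
    (hsym : ∀ v : Amb n, Bform v v < 0 → HConvex (hTwoPointSym v K)) (hN : IsUnitNormal K a N)
    (hM : IsUnitNormal K b M) : ∃ r : ℝ, M - N = r • (b.1 - a.1) :=
  ⟨-_, by rw [hN.eq_hRefl hK ho hsym hM, hRefl, sub_sub_cancel_left, neg_smul]⟩

theorem exists_forall_isUnitNormal_eq (hK : HConvex K) (ho : o ∈ interior K)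
    (hsym : ∀ v : Amb n, Bform v v < 0 → HConvex (hTwoPointSym v K)) :
    ∃ (c : ℝ) (w : Amb n), ∀ a N, IsUnitNormal K a N → N = c • (a : Amb n) + w := by
  have hpair : ∀ i j : {p : Hyp n × Amb n // IsUnitNormal K p.1 p.2},
      ∃ r : ℝ, j.1.2 - i.1.2 = r • (j.1.1.1 - i.1.1.1) :=
    fun i j => i.2.exists_sub_eq_smul hK ho hsym j.2
  have hline : ∀ i j k : {p : Hyp n × Amb n // IsUnitNormal K p.1 p.2}, i.1.1.1 ≠ j.1.1.1 →
      i.1.1.1 ≠ k.1.1.1 → j.1.1.1 ≠ k.1.1.1 →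
      LinearIndependent ℝ ![j.1.1.1 - i.1.1.1, k.1.1.1 - i.1.1.1] :=
    fun _ _ _ hij hik hjk => Hyp.linearIndependent_sub (ne_of_apply_ne _ hij)
      (ne_of_apply_ne _ hik) (ne_of_apply_ne _ hjk)
  obtain ⟨c, w, hcw⟩ := exists_eq_smul_add_of_sub_eq_smul hline hpair
  exact ⟨c, w, fun a N hN => hcw ⟨(a, N), hN⟩⟩

end UnitNormal

section Center

variable {n : ℕ} [NeZero n] {K : Set (Hyp n)}

/-- The normals are `N = c • a + w`, and the center is `z = -c⁻¹ • w`. -/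
theorem exists_forall_mem_frontier_Bform_eq_one (hK : IsCompact K) (hconv : HConvex K)
    (hint : (interior K).Nonempty)
    (hsym : ∀ v : Amb n, Bform v v < 0 → HConvex (hTwoPointSym v K)) :
    ∃ z : Amb n, Bform z z < 1 ∧ ∀ a ∈ frontier K, Bform (a : Amb n) z = 1 := by
  obtain ⟨o, ho⟩ := hint
  obtain ⟨c, w, hcw⟩ := exists_forall_isUnitNormal_eq hconv ho hsym
  have hnormal : ∀ a N, IsUnitNormal K a N → Bform (a : Amb n) w = -c := by
    intro a N hN
    have hperp := hN.perp
    rw [hcw a N hN, Bform_add_left, Bform_smul_left, a.Bform_self, mul_one, Bform_comm w] at hperp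
    exact eq_neg_of_add_eq_zero_right hperp
  have haw : ∀ a ∈ frontier K, Bform (a : Amb n) w = -c :=
    frontier_subset_of_forall_isUnitNormal (T := {a | Bform (a : Amb n) w = -c})
      hK.isClosed hconv ⟨o, ho⟩ (isClosed_eq (by fun_prop) continuous_const) hnormal
  obtain ⟨a, ha, b, hb, s, t, -, -, hst⟩ := exists_mem_frontier_smul_add_smul_eq hK ho
  obtain ⟨k, N, hN⟩ : ∃ k N, IsUnitNormal K k N := by
    by_contra! hnone
    exact frontier_subset_of_forall_isUnitNormal hK.isClosed hconv ⟨o, ho⟩ isClosed_empty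
      (fun k N hN => hnone k N hN) ha
  have hc : c ≠ 0 := by
    rintro rfl
    have hNo := hN.pos_of_mem_interior ho
    rw [hcw k N hN, zero_smul, zero_add, Bform_comm, hst, Bform_add_left, Bform_smul_left,
      Bform_smul_left, haw a ha, haw b hb, neg_zero, mul_zero, mul_zero, add_zero] at hNo
    exact hNo.false
  have hww : Bform w w = c ^ 2 - 1 := by
    have hunit := hN.unit
    rw [hcw k N hN] at hunit
    simp only [Bform_add_left, Bform_add_right, Bform_smul_left, Bform_smul_right, k.Bform_self,
      Bform_comm w k, hnormal k N hN] at hunit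
    linarith
  refine ⟨-c⁻¹ • w, ?_, fun a ha => ?_⟩
  · rw [Bform_smul_left, Bform_smul_right, hww]
    have : 0 < c⁻¹ ^ 2 := by positivity
    calc -c⁻¹ * (-c⁻¹ * (c ^ 2 - 1)) = 1 - c⁻¹ ^ 2 := by field_simp
      _ < 1 := sub_lt_self 1 this
  · rw [Bform_smul_right, haw a ha, neg_mul_neg, inv_mul_cancel₀ hc]

theorem Bform_le_one_of_mem (hK : IsCompact K) {z : Amb n}
    (hz : ∀ a ∈ frontier K, Bform (a : Amb n) z = 1) {x : Hyp n} (hx : x ∈ K) :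
    Bform (x : Amb n) z ≤ 1 := by
  by_cases hxi : x ∈ interior K
  · obtain ⟨a, ha, b, hb, s, t, hs, ht, hst⟩ := exists_mem_frontier_smul_add_smul_eq hK hxi
    have hxx : s * Bform (a : Amb n) x + t * Bform (b : Amb n) x = 1 := by
      rw [← Bform_smul_left, ← Bform_smul_left, ← Bform_add_left, ← hst, x.Bform_self]
    calc Bform (x : Amb n) z = s * 1 + t * 1 := by
          rw [hst, Bform_add_left, Bform_smul_left, Bform_smul_left, hz a ha, hz b hb]
      _ ≤ s * Bform (a : Amb n) x + t * Bform (b : Amb n) x := by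
          gcongr <;> exact Hyp.one_le_Bform _ _
      _ = 1 := hxx
  · exact (hz x ⟨subset_closure hx, hxi⟩).le

theorem eq_setOf_Bform_le_one (hK : IsCompact K) (hint : (interior K).Nonempty) {z : Amb n}
    (hz : ∀ a ∈ frontier K, Bform (a : Amb n) z = 1) :
    K = {x : Hyp n | Bform (x : Amb n) z ≤ 1} := by
  refine Set.Subset.antisymm (fun x hx => Bform_le_one_of_mem hK hz hx) fun x hx => ?_
  by_contra hxK
  obtain ⟨o, ho⟩ := hint
  obtain ⟨a, ha, s, t, hs, ht, hat⟩ := exists_mem_frontier_eq_smul_add_smul ho hxK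
  have hax : x ≠ a := fun h => hxK (h ▸ hK.isClosed.frontier_subset ha)
  have hsum : ∀ y : Amb n,
      s * Bform (o : Amb n) y + t * Bform (x : Amb n) y = Bform (a : Amb n) y := by
    intro y
    rw [hat, Bform_add_left, Bform_smul_left, Bform_smul_left]
  refine lt_irrefl (1 : ℝ) ?_
  calc 1 = s * Bform (o : Amb n) z + t * Bform (x : Amb n) z := by rw [hsum, hz a ha]
    _ ≤ s * 1 + t * 1 := by
        gcongr
        exacts [Bform_le_one_of_mem hK hz (interior_subset ho), hx]
    _ < s * Bform (o : Amb n) a + t * Bform (x : Amb n) a :=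
        add_lt_add_of_le_of_lt (mul_le_mul_of_nonneg_left (Hyp.one_le_Bform o a) hs)
          (mul_lt_mul_of_pos_left (Hyp.one_lt_Bform hax) ht)
    _ = 1 := by rw [hsum, a.Bform_self]

theorem Bform_self_pos_of_isCompact_setOf_le_one {z : Amb n}
    (hz : IsCompact {x : Hyp n | Bform (x : Amb n) z ≤ 1}) : 0 < Bform z z := by
  by_contra! hzz
  obtain ⟨R, hR⟩ := (hz.image (f := fun x : Hyp n => x.1.1) (by fun_prop)).bddAbove
  obtain ⟨e, he, hez⟩ := exists_norm_eq_one_norm_smul_eq z.2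
  have hsq : z.1 ^ 2 ≤ ‖z.2‖ ^ 2 := by rwa [Bform_self, sub_nonpos] at hzz
  have hfst : z.1 ≤ ‖z.2‖ := le_of_sq_le_sq hsq (norm_nonneg _)
  set L := max R ‖z.2‖
  have hL : 0 ≤ L := (norm_nonneg _).trans (le_max_right _ _)
  set x := Hyp.ofSnd (L • e)
  have hxe : ‖L • e‖ = L := by rw [norm_smul, he, mul_one, Real.norm_of_nonneg hL]
  have hLx : L < x.1.1 := hxe ▸ Hyp.norm_lt_fst_ofSnd (L • e)
  have hinner : inner ℝ x.1.2 z.2 = L * ‖z.2‖ := by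
    calc inner ℝ (L • e) z.2 = inner ℝ (L • e) (‖z.2‖ • e) := by rw [hez]
      _ = L * ‖z.2‖ := by
        rw [real_inner_smul_left, real_inner_smul_right, real_inner_self_eq_norm_sq, he]
        ring
  have hxz : Bform (x : Amb n) z ≤ 1 := by
    calc Bform (x : Amb n) z = x.1.1 * z.1 - L * ‖z.2‖ := congrArg _ hinner
      _ ≤ x.1.1 * ‖z.2‖ - L * ‖z.2‖ := by gcongr; exact x.fst_pos.le
      _ = (x.1.1 - L) * ‖z.2‖ := by ring
      _ ≤ (x.1.1 - L) * (x.1.1 + L) := by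
          gcongr
          linarith [le_max_right R ‖z.2‖, x.fst_pos]
      _ = x.1.1 ^ 2 - ‖x.1.2‖ ^ 2 := by rw [show ‖x.1.2‖ = L from hxe]; ring
      _ = 1 := x.2.2
  exact ((le_max_left R _).trans_lt hLx).not_ge (hR ⟨x, hxz, rfl⟩)

end Center

theorem exists_setOf_Bform_le_one_eq_hBall {n : ℕ} {z : Amb n} (hfst : 0 < z.1)
    (hpos : 0 < Bform z z) (hlt : Bform z z < 1) :
    ∃ (y : Hyp n) (r : ℝ), 0 < r ∧ {x : Hyp n | Bform (x : Amb n) z ≤ 1} = hBall y r := by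
  obtain ⟨y, hy⟩ := Hyp.exists_coe_eq_inv_sqrt_smul hfst hpos
  have hsqrt : 0 < √(Bform z z) := Real.sqrt_pos.2 hpos
  have hone : 1 < (√(Bform z z))⁻¹ :=
    (one_lt_inv₀ hsqrt).2 ((Real.sqrt_lt_sqrt hpos.le hlt).trans_eq Real.sqrt_one)
  refine ⟨y, Real.arcosh (√(Bform z z))⁻¹, Real.arcosh_pos hone, ?_⟩
  simp only [hBall, Real.cosh_arcosh hone.le, hy, Bform_smul_right,
    mul_le_iff_le_one_right (inv_pos.2 hsqrt)]

theorem hConvex_twoPointSym_is_ball_general {n : ℕ} [NeZero n] (K : Set (Hyp n))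
    (hKcomp : IsCompact K) (hKint : (interior K).Nonempty)
    (hsym : ∀ v : Amb n, Bform v v < 0 → HConvex (hTwoPointSym v K)) :
    ∃ z : Hyp n, ∃ r : ℝ, 0 < r ∧ K = hBall z r := by
  have hKconv : HConvex K :=
    hConvex_of_forall_twoPointSym hKcomp (hKint.mono interior_subset) hsym
  obtain ⟨z, hz_lt, hz⟩ :=
    exists_forall_mem_frontier_Bform_eq_one hKcomp hKconv hKint hsym
  have hKz : K = {x : Hyp n | Bform (x : Amb n) z ≤ 1} :=
    eq_setOf_Bform_le_one hKcomp hKint hz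
  have hz_pos : 0 < Bform z z := Bform_self_pos_of_isCompact_setOf_le_one (hKz ▸ hKcomp)
  obtain ⟨a, ha, -⟩ := exists_mem_frontier_smul_add_smul_eq hKcomp hKint.some_mem
  have hz_fst : 0 < z.1 := a.fst_pos_of_Bform_pos hz_pos.le (one_pos.trans_eq (hz a ha).symm)
  rw [hKz]
  exact exists_setOf_Bform_le_one_eq_hBall hz_fst hz_pos hz_lt

/-- a compact convex body in hyperbolic space all of whose two-point
symmetrizations are convex is a closed hyperbolic ball. -/
theorem hConvex_twoPointSym_is_ball (n : ℕ) (hn : 2 ≤ n) (K : Set (Hyp n))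
    (hKcomp : IsCompact K) (hKconv : HConvex K) (hKint : (interior K).Nonempty)
    (hsym : ∀ v : Amb n, Bform v v < 0 → HConvex (hTwoPointSym v K)) :
    ∃ z : Hyp n, ∃ r : ℝ, 0 < r ∧ K = hBall z r := by
  have : NeZero n := ⟨by omega⟩
  exact hConvex_twoPointSym_is_ball_general K hKcomp hKint hsym
end
end
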